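/- arXiv:1306.3681 — 5 statements merged into one kernel-verified Lean document; each statement's English description precedes it below -/
import Mathlib

section
/- Let R be a natural number, e_0,…,e_R integers, and s a complex number with s ≠ r for every integer 0 ≤ r ≤ R. Then as real p tends to 1 from above, (p−1)^{−(e_0+⋯+e_R)} · Π_{r=0}^{R} (1 − p^{r−s})^{e_r} tends to Π_{r=0}^{R} (s − r)^{e_r}, where p^{r−s} is the complex power of the positive real p and the outer powers are integer powers. -/
/-!
Since `(p - 1) ^ (-∑ e r) = ∏ (p - 1) ^ (-e r)`, the expression equals
`∏ ((1 - p ^ (r - s)) / (p - 1)) ^ e r` for `p ≠ 1`. Each base tends to `s - r`,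
the negative of the derivative of `p ↦ p ^ (r - s)` at `1` (`tendsto_one_sub_cpow_div`), and `s - r ≠ 0` makes the integer power
continuous there, whatever the sign of `e r`.
-/

open Complex Filter Topology Finset

/-- The quotient is the negated slope of `p ↦ p ^ a` at `1`, where the derivative is `a`. With `a = r - s` this is the
limit of a single renormalized factor. -/
lemma tendsto_one_sub_cpow_div (a : ℂ) :
    Tendsto (fun p : ℝ => (1 - (p : ℂ) ^ a) / ((p : ℂ) - 1)) (𝓝[>] (1 : ℝ)) (𝓝 (-a)) := by
  have h1 : HasDerivAt (fun z : ℂ => z ^ a) a ((1 : ℝ) : ℂ) := by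
    have h := (hasDerivAt_id (1 : ℂ)).cpow_const (c := a) (by simp)
    simpa using h
  have h2 := (hasDerivAt_iff_tendsto_slope.mp h1.comp_ofReal).mono_left
    (nhdsWithin_mono (1 : ℝ) (fun p (hp : 1 < p) => hp.ne'))
  refine h2.neg.congr fun p => ?_
  simp only [slope_def_module, Complex.real_smul, Complex.ofReal_one, Complex.one_cpow]
  push_cast
  ring

/-- Soulé's renormalized limit: with integer exponents `e 0, …, e R` and `s ≠ r` for all
integers `0 ≤ r ≤ R`, as real `p → 1⁺`,
`(p-1)^{-(e_0+⋯+e_R)} Π_{r=0}^R (1 - p^{r-s})^{e_r}` tends to `Π_{r=0}^R (s-r)^{e_r}`. -/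
theorem tendsto_soule_limit (R : ℕ) (e : ℕ → ℤ) (s : ℂ)
    (hs : ∀ r : ℕ, r ≤ R → s ≠ (r : ℂ)) :
    Tendsto (fun p : ℝ =>
        ((p : ℂ) - 1) ^ (-(∑ r ∈ Finset.range (R + 1), e r)) *
          ∏ r ∈ Finset.range (R + 1), (1 - (p : ℂ) ^ ((r : ℂ) - s)) ^ (e r))
      (𝓝[>] (1 : ℝ))
      (𝓝 (∏ r ∈ Finset.range (R + 1), (s - (r : ℂ)) ^ (e r))) := by
  have key : Tendsto (fun p : ℝ => ∏ r ∈ Finset.range (R + 1),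
      ((1 - (p : ℂ) ^ ((r : ℂ) - s)) / ((p : ℂ) - 1)) ^ (e r)) (𝓝[>] (1 : ℝ))
      (𝓝 (∏ r ∈ Finset.range (R + 1), (s - (r : ℂ)) ^ (e r))) := by
    refine tendsto_finsetProd _ fun r hr => ?_
    have hsr : s - (r : ℂ) ≠ 0 :=
      sub_ne_zero.mpr (hs r (Nat.lt_succ_iff.mp (Finset.mem_range.mp hr)))
    have h := tendsto_one_sub_cpow_div ((r : ℂ) - s)
    rw [neg_sub] at h
    exact h.zpow₀ (e r) (Or.inl hsr)
  refine key.congr' ?_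
  filter_upwards [self_mem_nhdsWithin] with p hp
  have hp0 : (p : ℂ) - 1 ≠ 0 := by
    rw [sub_ne_zero]
    exact_mod_cast (ne_of_gt (Set.mem_Ioi.mp hp))
  have hsum : ∀ t : Finset ℕ,
      ((p : ℂ) - 1) ^ (∑ r ∈ t, e r) = ∏ r ∈ t, ((p : ℂ) - 1) ^ (e r) := by
    intro t
    induction t using Finset.induction_on with
    | empty => simp
    | insert a t ha ih => rw [Finset.sum_insert ha, Finset.prod_insert ha, zpow_add₀ hp0, ih]
  simp only [div_zpow]
  rw [Finset.prod_div_distrib, zpow_neg, hsum, div_eq_inv_mul]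
end

section
/- Let d be a natural number and b : ℕ → ℤ a function satisfying b(l) = b(d − l) for all 0 ≤ l ≤ d. Define f(s) = Π_{l=0}^{d} (s − l)^{−b(l)} for complex s (integer powers). Then for every complex s with s ≠ l for all integers 0 ≤ l ≤ d, one has f(d − s) = (−1)^{b(0)+b(1)+⋯+b(d)} · f(s). -/
open Complex Finset

/-- Functional equation of the refined 𝔽₁-zeta function: if `b l = b (d - l)` for
`0 ≤ l ≤ d` and `f s = Π_{l=0}^d (s-l)^{-b l}`, then for `s` avoiding the integers
`0, …, d` one has `f(d - s) = (-1)^{b 0 + ⋯ + b d} f(s)`. -/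
theorem zeta_F1_functional_equation (d : ℕ) (b : ℕ → ℤ)
    (hb : ∀ l : ℕ, l ≤ d → b l = b (d - l))
    (f : ℂ → ℂ)
    (hf : ∀ s : ℂ, f s = ∏ l ∈ Finset.range (d + 1), (s - (l : ℂ)) ^ (-(b l)))
    (s : ℂ) (hs : ∀ l : ℕ, l ≤ d → s ≠ (l : ℂ)) :
    f ((d : ℂ) - s) = (-1 : ℂ) ^ (∑ l ∈ Finset.range (d + 1), b l) * f s := by
  have hpow : ∀ n : ℕ, (-1 : ℂ) ^ (∑ l ∈ Finset.range n, b l)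
      = ∏ l ∈ Finset.range n, (-1 : ℂ) ^ (b l) := by
    intro n
    induction n with
    | zero => simp
    | succ n ih =>
      rw [Finset.sum_range_succ, Finset.prod_range_succ, zpow_add₀ (by norm_num), ih]
  -- Reflecting the index `l ↦ d - l` turns `d - s - l` into `-(s - l)`, and the symmetry of `b`
  -- keeps the exponents; each factor then contributes a sign `(-1) ^ (b l)`.
  rw [hf, hf, hpow, ← Finset.prod_mul_distrib, ← Finset.prod_range_reflect]
  refine Finset.prod_congr rfl fun l hl => ?_
  have hld : l ≤ d := by
    have := Finset.mem_range.mp hl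
    omega
  have hbase : (d : ℂ) - s - ((d - l : ℕ) : ℂ) = (-1) * (s - l) := by
    push_cast [Nat.cast_sub hld]
    ring
  have hsign : (-1 : ℂ) ^ (-(b l)) = (-1) ^ (b l) := by
    rw [zpow_neg, ← inv_zpow, inv_neg_one]
  rw [Nat.add_sub_cancel, ← hb l hld, hbase, mul_zpow, hsign]
end

section
/- Let m : ℂ → ℤ be a finitely supported function, ω a complex number, and c ∈ {1, −1} an integer, such that m(ω − α) = c · m(α) for all complex α. Define ζ(s) = Π_{α ∈ supp(m)} (s − α)^{−m(α)} (integer powers). Then for every complex s such that s ≠ α and ω − s ≠ α for all α in the support of m, one has ζ(ω − s) = (−1)^{Σ_α m(α)} · ζ(s)^{c}. -/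
/-!
The reflection `α ↦ ω - α` permutes the support of `m`, because `c ≠ 0`. Reindexing the product
for `ζ (ω - s)` along it turns each factor into `(-(s - α)) ^ (-(c * m α))`, which is
`(-1) ^ m α * ((s - α) ^ (-m α)) ^ c`, the sign depending only on the parity of `m α`.
-/

open Complex Finset

theorem prod_neg_one_zpow (t : Finset ℂ) (m : ℂ → ℤ) :
    ∏ α ∈ t, (-1 : ℂ) ^ m α = (-1 : ℂ) ^ (∑ α ∈ t, m α) := by
  classical
  induction t using Finset.induction_on with
  | empty => simp
  | insert a t ha ih =>
    rw [Finset.prod_insert ha, Finset.sum_insert ha, ih, zpow_add₀ (by norm_num)]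

/-- Functional equation of the zeta function of a finite sum of powers
`N(u) = Σ_α m(α) u^α`: if `m(ω - α) = c m(α)` with `c = ±1`, then
`ζ(ω - s) = (-1)^{Σ_α m(α)} ζ(s)^c`, where `ζ(s) = Π_α (s-α)^{-m(α)}`. -/
theorem zeta_sum_of_powers_functional_equation (m : ℂ → ℤ)
    (hfin : (Function.support m).Finite) (ω : ℂ) (c : ℤ) (hc : c = 1 ∨ c = -1)
    (hm : ∀ α : ℂ, m (ω - α) = c * m α)
    (ζ : ℂ → ℂ)
    (hζ : ∀ s : ℂ, ζ s = ∏ α ∈ hfin.toFinset, (s - α) ^ (-(m α)))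
    (s : ℂ) (hs : ∀ α ∈ hfin.toFinset, s ≠ α ∧ ω - s ≠ α) :
    ζ (ω - s) = (-1 : ℂ) ^ (∑ α ∈ hfin.toFinset, m α) * (ζ s) ^ c := by
  have hc0 : c ≠ 0 := by rcases hc with rfl | rfl <;> norm_num
  have hmem : ∀ α ∈ hfin.toFinset, ω - α ∈ hfin.toFinset := by
    intro α hα
    simp only [Set.Finite.mem_toFinset, Function.mem_support] at hα ⊢
    rw [hm]
    exact mul_ne_zero hc0 hα
  rw [hζ, hζ, ← prod_neg_one_zpow, ← Finset.prod_zpow, ← Finset.prod_mul_distrib]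
  refine Finset.prod_bij' (fun α _ => ω - α) (fun α _ => ω - α) hmem hmem
    (fun α _ => sub_sub_cancel ω α) (fun α _ => sub_sub_cancel ω α) ?_
  intro α _
  have hbase : ω - s - α = (-1) * (s - (ω - α)) := by ring
  have hexp : -(m α) = -(m (ω - α)) * c := by
    rw [hm]
    rcases hc with rfl | rfl <;> ring
  have hsign : (-1 : ℂ) ^ (-(m α)) = (-1 : ℂ) ^ m (ω - α) := by
    rw [hm]
    rcases hc with rfl | rfl
    · rw [one_mul, zpow_neg, ← inv_zpow, inv_neg_one]
    · rw [neg_one_mul]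
  rw [hbase, mul_zpow, hsign, hexp, zpow_mul]
end

section
/- Let r ≥ 1 be a natural number and u a nonzero complex number. Then Π_{j=0}^{r−1} (u^{−r} − u^{−j}) = (−1)^r · u^{−r(3r−1)/2} · Π_{j=0}^{r−1} (u^{r} − u^{j}), where all powers of u are integer powers and r(3r−1)/2 is a natural number. -/
open Complex Finset

/-- Functional equation of the counting polynomial of `GL(r)`:
`Π_{j=0}^{r-1} (u^{-r} - u^{-j}) = (-1)^r u^{-r(3r-1)/2} Π_{j=0}^{r-1} (u^r - u^j)`
for every nonzero complex `u` and `r ≥ 1`. -/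
theorem GL_counting_functional_equation (r : ℕ) (hr : 1 ≤ r) (u : ℂ) (hu : u ≠ 0) :
    ∏ j ∈ Finset.range r, (u ^ (-(r : ℤ)) - u ^ (-(j : ℤ)))
      = (-1 : ℂ) ^ r * u ^ (-((r * (3 * r - 1) / 2 : ℕ) : ℤ)) *
          ∏ j ∈ Finset.range r, (u ^ r - u ^ j) := by
  -- Each factor satisfies `u⁻ʳ - u⁻ʲ = -u^{-(r+j)} (uʳ - uʲ)`; it remains to sum the exponents `r + j`.
  have hsum : r * (3 * r - 1) / 2 = ∑ j ∈ Finset.range r, (r + j) := by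
    have h := Finset.sum_range_id_mul_two r
    rw [Finset.sum_add_distrib, Finset.sum_const, Finset.card_range, smul_eq_mul]
    obtain ⟨k, rfl⟩ : ∃ k, r = k + 1 := ⟨r - 1, by omega⟩
    have h3 : 3 * (k + 1) - 1 = 3 * k + 2 := by omega
    rw [Nat.add_sub_cancel] at h
    rw [h3]
    apply Nat.div_eq_of_eq_mul_left two_pos
    linarith
  have hfactor : ∀ j ∈ Finset.range r, u ^ (-(r : ℤ)) - u ^ (-(j : ℤ))
      = (-1) * (u ^ (r + j))⁻¹ * (u ^ r - u ^ j) := by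
    intro j _
    rw [zpow_neg, zpow_neg, zpow_natCast, zpow_natCast, pow_add]
    field_simp
    ring
  rw [Finset.prod_congr rfl hfactor, Finset.prod_mul_distrib, Finset.prod_mul_distrib,
    Finset.prod_const, Finset.card_range, Finset.prod_inv_distrib, Finset.prod_pow_eq_pow_sum,
    hsum, zpow_neg, zpow_natCast]
end

section
/- Let λ : ℕ → ℝ be a sequence with λ_j > 0 for all j, and let s > 0 and w > 0 be real numbers such that the series Σ_{j=0}^{∞} (λ_j + s)^{−w} converges. Then ∫_{1}^{∞} ( Σ_{j=0}^{∞} u^{−λ_j} ) · u^{−s−1} · (log u)^{w−1} du = Γ(w) · Σ_{j=0}^{∞} (λ_j + s)^{−w}, where all powers are real powers of positive reals and Γ is the real Gamma function. -/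
/-!
The substitution `u = exp t` turns the integral into
`∫_0^∞ Σ_j t^{w-1} exp(-(λ_j + s) t) dt`. Each summand is nonnegative with integral
`Γ(w) (λ_j + s)^{-w}` (`Real.integral_rpow_mul_exp_neg_mul_Ioi`), and these integrals are summable
by hypothesis, so sum and integral may be interchanged.
-/

open Real

/-- The zeta integral of the spectral counting function `N(u) = Σ_j u^{-λ_j}`:
for positive `λ_j`, `s > 0`, `w > 0` with `Σ_j (λ_j + s)^{-w}` convergent,
`∫_1^∞ N(u) u^{-s-1} (log u)^{w-1} du = Γ(w) Σ_j (λ_j + s)^{-w}`. -/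
theorem spectral_zeta_integral (l : ℕ → ℝ) (hl : ∀ j, 0 < l j)
    (s w : ℝ) (hs : 0 < s) (hw : 0 < w)
    (hconv : Summable fun j => (l j + s) ^ (-w)) :
    ∫ u in Set.Ioi (1 : ℝ),
        (∑' j : ℕ, u ^ (-(l j))) * u ^ (-s - 1) * (Real.log u) ^ (w - 1)
      = Real.Gamma w * ∑' j : ℕ, (l j + s) ^ (-w) := by
  have hpos : ∀ j, 0 < l j + s := fun j => add_pos (hl j) hs
  have hint : ∀ j, ∫ t in Set.Ioi (0 : ℝ), t ^ (w - 1) * exp (-((l j + s) * t))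
      = Gamma w * (l j + s) ^ (-w) := fun j => by
    rw [integral_rpow_mul_exp_neg_mul_Ioi hw (hpos j), one_div, inv_rpow (hpos j).le,
      ← rpow_neg (hpos j).le, mul_comm]
  -- A nonzero Bochner integral certifies integrability.
  have hintegrable : ∀ j, MeasureTheory.Integrable
      (fun t : ℝ => t ^ (w - 1) * exp (-((l j + s) * t)))
      (MeasureTheory.volume.restrict (Set.Ioi 0)) := fun j => by
    apply MeasureTheory.Integrable.of_integral_ne_zero
    rw [hint j]
    exact (mul_pos (Gamma_pos_of_pos hw) (rpow_pos_of_pos (hpos j) _)).ne'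
  have hnorm : ∀ j, ∫ t in Set.Ioi (0 : ℝ), ‖t ^ (w - 1) * exp (-((l j + s) * t))‖
      = Gamma w * (l j + s) ^ (-w) := fun j => by
    rw [← hint j]
    refine MeasureTheory.setIntegral_congr_fun measurableSet_Ioi fun t ht => ?_
    exact norm_of_nonneg (mul_nonneg (rpow_nonneg (le_of_lt ht) _) (exp_pos _).le)
  have hswap := MeasureTheory.integral_tsum_of_summable_integral_norm hintegrable
    (by simpa only [hnorm] using hconv.mul_left (Gamma w))
  simp only [hint] at hswap
  rw [← tsum_mul_left, hswap, ← exp_zero, ← MeasureTheory.integral_comp_exp_Ioi]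
  refine MeasureTheory.setIntegral_congr_fun measurableSet_Ioi fun t _ => ?_
  simp only [exp_zero, smul_eq_mul, log_exp, ← exp_mul]
  rw [← tsum_mul_right, ← tsum_mul_right, ← tsum_mul_left]
  refine tsum_congr fun j => ?_
  have hexp : exp (-((l j + s) * t)) = exp t * exp (t * -l j) * exp (t * (-s - 1)) := by
    rw [← exp_add, ← exp_add]
    congr 1
    ring
  rw [hexp]
  ring
end
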